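/- arXiv:1801.01205 — 2 statements merged into one kernel-verified Lean document; each statement's English description precedes it below -/
import Mathlib

section
/- Fix k, Σ ∈ ℝ and Λ > 0, and define the Black–Scholes quanto price C^{BS}(y) = e^{y−Σ} Φ(d₁(y)) − e^k Φ(d₂(y)) for y ∈ ℝ, where d₁(y) = (y − k − Σ + Λ/2)/√Λ and d₂(y) = d₁(y) − √Λ. Then for every integer n ≥ 1 and every y ∈ ℝ, the n-th derivative of C^{BS} satisfies (d^n/dy^n) C^{BS}(y) = e^{y−Σ} [ Φ(d₁(y)) + 1_{n ≥ 2} · φ(d₁(y)) · Σ_{j=1}^{n−1} C(n−1, j) (−1)^{j−1} H_{j−1}(d₁(y)) / Λ^{j/2} ], where C(n−1, j) is the binomial coefficient. (This is Lemma 3.6 of the paper, which expresses all Greeks of the Black–Scholes-type quanto price via Hermite polynomials.) -/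
/-!
The function `u ↦ e^{u-Σ}` is its own derivative, and `e^{y-Σ} φ(d₁) = e^k φ(d₂)` because
`d₁² - d₂² = 2 (y - k - Σ)`. Hence the two density terms in the first derivative of the price
cancel (`hasDerivAt_price`) and `C' = e^{y-Σ} Φ(d₁)`. The `n`-th derivative is then the
`(n-1)`-st derivative of a product, given by the Leibniz rule: all derivatives of the
exponential factor agree, and the `j`-th derivative of `Φ ∘ d₁` (`cdfDeriv`) comes from
`Φ' = φ` and from `(H_j φ)' = -H_{j+1} φ`, i.e. the recursion `H_{j+1} = x H_j - H_j'`.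
-/

open Real

/-- The standard normal cumulative distribution function. -/
noncomputable def stdNormalCDF (x : ℝ) : ℝ :=
  ∫ u in Set.Iic x, Real.exp (-u ^ 2 / 2) / Real.sqrt (2 * Real.pi)

/-- The standard normal probability density function. -/
noncomputable def stdNormalPDF (x : ℝ) : ℝ :=
  Real.exp (-x ^ 2 / 2) / Real.sqrt (2 * Real.pi)

/-- The probabilists' Hermite polynomial of degree `j`, evaluated at a real `x`. -/
noncomputable def hermiteEval (j : ℕ) (x : ℝ) : ℝ :=
  Polynomial.aeval x (Polynomial.hermite j)

lemma hasDerivAt_stdNormalCDF (x : ℝ) : HasDerivAt stdNormalCDF (stdNormalPDF x) x := by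
  have hc : Continuous stdNormalPDF := by unfold stdNormalPDF; fun_prop
  have hi : MeasureTheory.Integrable stdNormalPDF := by
    have h := (integrable_exp_neg_mul_sq (b := 1 / 2) (by norm_num)).div_const
      (Real.sqrt (2 * Real.pi))
    refine h.congr (Filter.Eventually.of_forall fun u => ?_)
    simp only [stdNormalPDF]
    congr 2
    ring
  -- `Φ` differs from the primitive based at `0` by the constant `Φ(0)`.
  have he : stdNormalCDF = fun t => stdNormalCDF 0 + ∫ u in (0 : ℝ)..t, stdNormalPDF u := by
    funext t
    rw [← intervalIntegral.integral_Iic_sub_Iic hi.integrableOn hi.integrableOn]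
    simp only [stdNormalCDF, stdNormalPDF]
    ring
  rw [he]
  exact (intervalIntegral.integral_hasDerivAt_right (hc.intervalIntegrable _ _)
    hc.aestronglyMeasurable.stronglyMeasurableAtFilter hc.continuousAt).const_add _

lemma hasDerivAt_stdNormalPDF (x : ℝ) : HasDerivAt stdNormalPDF (-x * stdNormalPDF x) x := by
  have h1 : HasDerivAt (fun u : ℝ => -u ^ 2 / 2) (-x) x := by
    refine (((hasDerivAt_id x).pow 2).neg.div_const 2).congr_deriv ?_
    simp
    ring
  refine (h1.exp.div_const (Real.sqrt (2 * Real.pi))).congr_deriv ?_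
  simp only [stdNormalPDF]
  ring

lemma hasDerivAt_hermiteEval_mul_stdNormalPDF (j : ℕ) (x : ℝ) :
    HasDerivAt (fun u => hermiteEval j u * stdNormalPDF u)
      (-(hermiteEval (j + 1) x * stdNormalPDF x)) x := by
  have h := (Polynomial.hasDerivAt_aeval (Polynomial.hermite j) x).mul (hasDerivAt_stdNormalPDF x)
  refine h.congr_deriv ?_
  simp only [hermiteEval, Polynomial.hermite_succ, map_sub, map_mul, Polynomial.aeval_X]
  ring

/-- The `j`-th derivative of `y ↦ Φ ((y - c) / s)`, in closed form. -/
noncomputable def cdfDeriv (c s : ℝ) : ℕ → ℝ → ℝ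
  | 0, y => stdNormalCDF ((y - c) / s)
  | j + 1, y => (-1) ^ j * (hermiteEval j ((y - c) / s) * stdNormalPDF ((y - c) / s)) / s ^ (j + 1)

lemma hasDerivAt_cdfDeriv (c s : ℝ) (j : ℕ) (y : ℝ) :
    HasDerivAt (cdfDeriv c s j) (cdfDeriv c s (j + 1) y) y := by
  have hd : HasDerivAt (fun u : ℝ => (u - c) / s) (1 / s) y :=
    ((hasDerivAt_id y).sub_const c).div_const s
  cases j with
  | zero =>
    refine ((hasDerivAt_stdNormalCDF _).comp y hd).congr_deriv ?_
    simp [cdfDeriv, hermiteEval, div_eq_mul_inv]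
  | succ j =>
    refine ((((hasDerivAt_hermiteEval_mul_stdNormalPDF j _).comp y hd).const_mul
      ((-1) ^ j)).div_const (s ^ (j + 1))).congr_deriv ?_
    simp only [cdfDeriv, pow_succ, div_eq_mul_inv, mul_inv]
    ring

/-- A sequence of functions in which each is the derivative of the previous one consists of the
iterated derivatives of its first term. -/
lemma iteratedDeriv_of_hasDerivAt_succ {a : ℕ → ℝ → ℝ}
    (h : ∀ j y, HasDerivAt (a j) (a (j + 1) y) y) (m : ℕ) : iteratedDeriv m (a 0) = a m := by
  induction m with
  | zero => simp
  | succ m ih =>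
    rw [iteratedDeriv_succ, ih]
    exact funext fun y => (h m y).deriv

lemma contDiff_of_hasDerivAt_succ {a : ℕ → ℝ → ℝ}
    (h : ∀ j y, HasDerivAt (a j) (a (j + 1) y) y) (m : ℕ) : ContDiff ℝ m (a 0) :=
  contDiff_of_differentiable_iteratedDeriv fun i _ => by
    rw [iteratedDeriv_of_hasDerivAt_succ h]
    exact fun y => (h i y).differentiableAt

/-- The first derivative of the price: the two density terms cancel. -/
lemma hasDerivAt_price (k Sig Λ : ℝ) (hΛ : 0 < Λ) (y : ℝ) :
    HasDerivAt (fun y => Real.exp (y - Sig) *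
        stdNormalCDF ((y - (k + Sig - Λ / 2)) / Real.sqrt Λ) -
        Real.exp k * stdNormalCDF ((y - (k + Sig - Λ / 2)) / Real.sqrt Λ - Real.sqrt Λ))
      (Real.exp (y - Sig) * stdNormalCDF ((y - (k + Sig - Λ / 2)) / Real.sqrt Λ)) y := by
  have hs : 0 < Real.sqrt Λ := Real.sqrt_pos.2 hΛ
  have hsq : Real.sqrt Λ ^ 2 = Λ := Real.sq_sqrt hΛ.le
  have hd : HasDerivAt (fun u : ℝ => (u - (k + Sig - Λ / 2)) / Real.sqrt Λ)
      (1 / Real.sqrt Λ) y := ((hasDerivAt_id y).sub_const _).div_const _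
  have hE : HasDerivAt (fun u : ℝ => Real.exp (u - Sig)) (Real.exp (y - Sig)) y := by
    simpa using ((hasDerivAt_id y).sub_const Sig).exp
  have h := (hE.mul ((hasDerivAt_stdNormalCDF _).comp y hd)).sub
    (((hasDerivAt_stdNormalCDF _).comp y (hd.sub_const (Real.sqrt Λ))).const_mul (Real.exp k))
  refine h.congr_deriv ?_
  have key : Real.exp (y - Sig) * stdNormalPDF ((y - (k + Sig - Λ / 2)) / Real.sqrt Λ) =
      Real.exp k *
        stdNormalPDF ((y - (k + Sig - Λ / 2)) / Real.sqrt Λ - Real.sqrt Λ) := by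
    simp only [stdNormalPDF, ← mul_div_assoc, ← Real.exp_add]
    congr 2
    have hm : (y - (k + Sig - Λ / 2)) / Real.sqrt Λ * Real.sqrt Λ = y - (k + Sig - Λ / 2) :=
      div_mul_cancel₀ _ hs.ne'
    linear_combination -hm + hsq / 2
  simp only [Function.comp_apply]
  linear_combination (1 / Real.sqrt Λ) * key

/-- Lemma 3.6 of the paper: the `n`-th derivative of the Black–Scholes-type quanto
price `C^{BS}(y) = e^{y-Σ} Φ(d₁(y)) - e^k Φ(d₂(y))` is
`e^{y-Σ} [Φ(d₁) + 1_{n ≥ 2} φ(d₁) ∑_{j=1}^{n-1} (n-1 choose j) (-1)^{j-1}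
H_{j-1}(d₁) / Λ^{j/2}]`. -/
theorem blackScholes_quanto_iteratedDeriv
    (k Sig Λ : ℝ) (hΛ : 0 < Λ)
    (d₁ d₂ : ℝ → ℝ)
    (hd₁ : ∀ y, d₁ y = (y - k - Sig + Λ / 2) / Real.sqrt Λ)
    (hd₂ : ∀ y, d₂ y = d₁ y - Real.sqrt Λ)
    (CBS : ℝ → ℝ)
    (hCBS : ∀ y, CBS y = Real.exp (y - Sig) * stdNormalCDF (d₁ y) -
        Real.exp k * stdNormalCDF (d₂ y))
    (n : ℕ) (hn : 1 ≤ n) (y : ℝ) :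
    iteratedDeriv n CBS y =
      Real.exp (y - Sig) *
        (stdNormalCDF (d₁ y) +
          (if 2 ≤ n then (1 : ℝ) else 0) * stdNormalPDF (d₁ y) *
            ∑ j ∈ Finset.Icc 1 (n - 1),
              (Nat.choose (n - 1) j : ℝ) * (-1) ^ (j - 1) *
                hermiteEval (j - 1) (d₁ y) / Real.sqrt Λ ^ j) := by
  obtain ⟨m, rfl⟩ : ∃ m, n = m + 1 := ⟨n - 1, by omega⟩
  have hd : ∀ y, d₁ y = (y - (k + Sig - Λ / 2)) / Real.sqrt Λ := fun y => by
    rw [hd₁]; congr 1; ring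
  have hC : CBS = fun y => Real.exp (y - Sig) *
        stdNormalCDF ((y - (k + Sig - Λ / 2)) / Real.sqrt Λ) -
        Real.exp k * stdNormalCDF ((y - (k + Sig - Λ / 2)) / Real.sqrt Λ - Real.sqrt Λ) := by
    funext y
    rw [hCBS, hd₂, hd]
  have hA := hasDerivAt_cdfDeriv (k + Sig - Λ / 2) (Real.sqrt Λ)
  have hE : ∀ (_ : ℕ) (y : ℝ),
      HasDerivAt (fun u : ℝ => Real.exp (u - Sig)) (Real.exp (y - Sig)) y := fun _ y => by
    simpa using ((hasDerivAt_id y).sub_const Sig).exp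
  have hD : deriv CBS = cdfDeriv (k + Sig - Λ / 2) (Real.sqrt Λ) 0 *
      fun u => Real.exp (u - Sig) := by
    funext y
    rw [hC, (hasDerivAt_price k Sig Λ hΛ y).deriv]
    simp [cdfDeriv, mul_comm]
  have hEm := iteratedDeriv_of_hasDerivAt_succ (a := fun _ u => Real.exp (u - Sig)) hE
  rw [iteratedDeriv_succ', hD, iteratedDeriv_mul
    (contDiff_of_hasDerivAt_succ hA m).contDiffAt
    (contDiff_of_hasDerivAt_succ (a := fun _ u => Real.exp (u - Sig)) hE m).contDiffAt]
  simp only [hEm, iteratedDeriv_of_hasDerivAt_succ hA]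
  rw [Finset.sum_range_succ', Nat.add_sub_cancel, ← Finset.sum_image (s := Finset.range m)
    (g := fun j => j + 1) (f := fun j => (m.choose j : ℝ) *
      cdfDeriv (k + Sig - Λ / 2) (Real.sqrt Λ) j y * Real.exp (y - Sig))
    (by intro a _ b _ h; simpa using h)]
  have hI : (Finset.range m).image (fun j => j + 1) = Finset.Icc 1 m := by
    ext j
    simp only [Finset.mem_image, Finset.mem_range, Finset.mem_Icc]
    exact ⟨by rintro ⟨i, hi, rfl⟩; omega, fun h => ⟨j - 1, by omega, by omega⟩⟩
  -- For `n = 1` the sum is empty, so the indicator can be dropped.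
  have hind : (if 2 ≤ m + 1 then (1 : ℝ) else 0) * stdNormalPDF (d₁ y) *
      ∑ j ∈ Finset.Icc 1 m, (Nat.choose m j : ℝ) * (-1) ^ (j - 1) *
        hermiteEval (j - 1) (d₁ y) / Real.sqrt Λ ^ j =
      stdNormalPDF (d₁ y) * ∑ j ∈ Finset.Icc 1 m, (Nat.choose m j : ℝ) * (-1) ^ (j - 1) *
        hermiteEval (j - 1) (d₁ y) / Real.sqrt Λ ^ j := by
    rcases Nat.eq_zero_or_pos m with rfl | hm
    · simp
    · rw [if_pos (by omega), one_mul]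
  rw [hI, hind, mul_add, Finset.mul_sum, Finset.mul_sum, add_comm]
  congr 1
  · simp [cdfDeriv, hd, mul_comm]
  · refine Finset.sum_congr rfl fun j hj => ?_
    obtain ⟨i, rfl⟩ : ∃ i, j = i + 1 := ⟨j - 1, by have := Finset.mem_Icc.1 hj; omega⟩
    simp only [cdfDeriv, hd, Nat.add_sub_cancel]
    ring
end

section
/- Let m ∈ ℝ, v > 0, and let h : ℝ → ℝ be continuous with |h(x)| ≤ c₁ e^{c₂|x|} for all x, for some positive constants c₁, c₂. Let Y be a real random variable with law N(m, v) and define g(ε) = E[h(Y + ε)] for ε ∈ ℝ. Then g is infinitely differentiable on ℝ, and for every integer i ≥ 1 and every ε ∈ ℝ, g^{(i)}(ε) = v^{−i/2} E[ h(Y + ε) H_i((Y − m)/√v) ]. (This establishes that the Greeks g_i^h of the paper's Definition 3.4 are well defined for payoffs of at most exponential growth and gives their Hermite-polynomial representation.) -/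
/-!
Write `μ = N(m, v)` and `s = √v`. By the Cameron–Martin shift
(`integral_shift_eq_integral_kernel`),
`E[h(Y + ε) H_i((Y - m)/s)] = ∫ h(y) H_i((y - m - ε)/s) exp((ε (y - m) - ε²/2)/v) dμ(y)`,
so the dependence on `ε` is moved from the merely continuous `h` to a smooth kernel.
The recursion `H_{i+1} = X H_i - H_i'` says that the `ε`-derivative of the `i`-th kernel is
`s⁻¹` times the `(i+1)`-st (`hasDerivAt_greekKernel`). For bounded `ε`, the product of `h` and
a kernel is at most `C exp(K |y|)`, which is `μ`-integrable (`exists_integrable_bound`), so one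
may differentiate under the integral as often as desired.
-/

open MeasureTheory ProbabilityTheory Real

/-- The Hermite polynomial `H_i` at the standardized point `(y - m - ε)/√v`, times the
Cameron–Martin density of `N(m + ε, v)` with respect to `N(m, v)`. -/
noncomputable def greekKernel (m v : ℝ) (i : ℕ) (ε y : ℝ) : ℝ :=
  hermiteEval i ((y - m - ε) / √v) * exp ((ε * (y - m) - ε ^ 2 / 2) / v)

lemma continuous_hermiteEval (i : ℕ) : Continuous (hermiteEval i) :=
  Polynomial.continuous_aeval _

lemma hasDerivAt_hermiteEval (i : ℕ) (x : ℝ) :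
    HasDerivAt (hermiteEval i) (x * hermiteEval i x - hermiteEval (i + 1) x) x := by
  refine ((Polynomial.hermite i).hasDerivAt_aeval x).congr_deriv ?_
  simp [hermiteEval, Polynomial.hermite_succ]

lemma hasDerivAt_greekKernel (m : ℝ) {v : ℝ} (hv : 0 < v) (i : ℕ) (ε y : ℝ) :
    HasDerivAt (fun ε => greekKernel m v i ε y) ((√v)⁻¹ * greekKernel m v (i + 1) ε y) ε := by
  have hs : √v ≠ 0 := (sqrt_pos.2 hv).ne'
  have hu : HasDerivAt (fun ε : ℝ => (y - m - ε) / √v) (-1 / √v) ε :=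
    ((hasDerivAt_id ε).const_sub (y - m)).div_const _
  have hw : HasDerivAt (fun ε : ℝ => (ε * (y - m) - ε ^ 2 / 2) / v) ((y - m - ε) / v) ε := by
    refine ((((hasDerivAt_id ε).mul_const (y - m)).sub
      (((hasDerivAt_id ε).pow 2).div_const 2)).div_const v).congr_deriv ?_
    simp
  refine (((hasDerivAt_hermiteEval i _).comp ε hu).mul hw.exp).congr_deriv ?_
  -- Both terms of the product rule must carry the same denominator `√v`.
  have hvs : (y - m - ε) / v = (y - m - ε) / √v / √v := by
    rw [div_div, mul_self_sqrt hv.le]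
  rw [hvs]
  simp only [greekKernel, Function.comp_apply]
  field_simp
  ring

lemma continuous_greekKernel (m v : ℝ) (i : ℕ) (ε : ℝ) : Continuous (greekKernel m v i ε) := by
  have := continuous_hermiteEval i
  unfold greekKernel
  fun_prop

lemma exists_abs_aeval_le_exp (p : Polynomial ℤ) :
    ∃ C : ℝ, 0 ≤ C ∧ ∀ x : ℝ, |Polynomial.aeval x p| ≤ C * exp |x| := by
  induction p using Polynomial.induction_on' with
  | add p q hp hq =>
    obtain ⟨C, hC, hp⟩ := hp
    obtain ⟨D, hD, hq⟩ := hq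
    refine ⟨C + D, by positivity, fun x => ?_⟩
    rw [map_add, add_mul]
    exact (abs_add_le _ _).trans (add_le_add (hp x) (hq x))
  | monomial n a =>
    refine ⟨|(a : ℝ)| * n.factorial, by positivity, fun x => ?_⟩
    have h := pow_div_factorial_le_exp |x| (abs_nonneg x) n
    rw [div_le_iff₀ (by positivity)] at h
    rw [Polynomial.aeval_monomial, abs_mul, abs_pow, mul_assoc, mul_comm (n.factorial : ℝ)]
    simpa using mul_le_mul_of_nonneg_left h (abs_nonneg (a : ℝ))

lemma integrable_exp_mul_abs_gaussianReal (m : ℝ) (w : NNReal) (t : ℝ) :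
    Integrable (fun y => exp (t * |y|)) (gaussianReal m w) :=
  integrable_exp_mul_abs (integrable_exp_mul_gaussianReal t) (integrable_exp_mul_gaussianReal (-t))

/-- Domination of the integrand, uniform for `ε` in a bounded set. -/
lemma exists_integrable_bound (m : ℝ) {v : ℝ} (hv : 0 < v) {h : ℝ → ℝ} {c₁ c₂ : ℝ}
    (hgrowth : ∀ x : ℝ, |h x| ≤ c₁ * exp (c₂ * |x|)) (i : ℕ) (R : ℝ) :
    ∃ b : ℝ → ℝ, Integrable b (gaussianReal m v.toNNReal) ∧
      ∀ ε, |ε| ≤ R → ∀ y, |h y * greekKernel m v i ε y| ≤ b y := by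
  obtain ⟨C, hC, hp⟩ := exists_abs_aeval_le_exp (Polynomial.hermite i)
  have hs : 0 < √v := sqrt_pos.2 hv
  refine ⟨fun y => (c₁ * C * exp ((|m| + R) / √v + R * |m| / v)) *
    exp ((c₂ + 1 / √v + R / v) * |y|),
    (integrable_exp_mul_abs_gaussianReal _ _ _).const_mul _, fun ε hε y => ?_⟩
  have hym : |y - m| ≤ |y| + |m| := abs_sub y m
  have h1 : |hermiteEval i ((y - m - ε) / √v)| ≤ C * exp ((|y| + |m| + R) / √v) := by
    refine (hp _).trans ?_
    gcongr
    rw [abs_div, abs_of_pos hs]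
    gcongr
    exact (abs_sub (y - m) ε).trans (by linarith)
  have h2 : exp ((ε * (y - m) - ε ^ 2 / 2) / v) ≤ exp (R * (|y| + |m|) / v) := by
    gcongr
    have : ε * (y - m) ≤ R * (|y| + |m|) := by
      refine (le_abs_self _).trans ?_
      rw [abs_mul]
      exact mul_le_mul hε hym (abs_nonneg _) ((abs_nonneg _).trans hε)
    nlinarith [sq_nonneg ε]
  have h0 : 0 ≤ c₁ * exp (c₂ * |y|) := (abs_nonneg _).trans (hgrowth y)
  calc |h y * greekKernel m v i ε y|
      = |h y| * (|hermiteEval i ((y - m - ε) / √v)| *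
          exp ((ε * (y - m) - ε ^ 2 / 2) / v)) := by
        rw [greekKernel, abs_mul, abs_mul, abs_of_pos (exp_pos _)]
    _ ≤ (c₁ * exp (c₂ * |y|)) * ((C * exp ((|y| + |m| + R) / √v)) *
          exp (R * (|y| + |m|) / v)) := by
        gcongr
        exact hgrowth y
    _ = c₁ * C * (exp (c₂ * |y|) * exp ((|y| + |m| + R) / √v) *
          exp (R * (|y| + |m|) / v)) := by ring
    _ = _ := by
        rw [← exp_add, ← exp_add]
        beta_reduce
        rw [mul_assoc (c₁ * C), ← exp_add]
        congr 2
        ring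

/-- Differentiation under the integral sign raises the Hermite degree by one. -/
lemma hasDerivAt_integral_greekKernel (m : ℝ) {v : ℝ} (hv : 0 < v) {h : ℝ → ℝ}
    (hcont : Continuous h) {c₁ c₂ : ℝ}
    (hgrowth : ∀ x : ℝ, |h x| ≤ c₁ * exp (c₂ * |x|)) (i : ℕ) (ε : ℝ) :
    HasDerivAt (fun ε => ∫ y, h y * greekKernel m v i ε y ∂gaussianReal m v.toNNReal)
      ((√v)⁻¹ * ∫ y, h y * greekKernel m v (i + 1) ε y ∂gaussianReal m v.toNNReal) ε := by
  have hmeas : ∀ j ε, AEStronglyMeasurable (fun y => h y * greekKernel m v j ε y)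
      (gaussianReal m v.toNNReal) := fun j ε =>
    (hcont.mul (continuous_greekKernel m v j ε)).aestronglyMeasurable
  obtain ⟨b₀, hb₀, hle₀⟩ := exists_integrable_bound m hv hgrowth i |ε|
  obtain ⟨b, hb, hle⟩ := exists_integrable_bound m hv hgrowth (i + 1) (|ε| + 1)
  rw [← integral_const_mul]
  refine (hasDerivAt_integral_of_dominated_loc_of_deriv_le
    (F' := fun ε y => (√v)⁻¹ * (h y * greekKernel m v (i + 1) ε y))
    (bound := fun y => (√v)⁻¹ * b y) (Metric.ball_mem_nhds ε one_pos)
    (Filter.Eventually.of_forall (hmeas i))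
    (hb₀.mono' (hmeas i ε) (.of_forall (hle₀ ε le_rfl)))
    ((hmeas (i + 1) ε).const_mul _) (.of_forall fun y x hx => ?_) (hb.const_mul _)
    (.of_forall fun y x _ => ?_)).2
  · rw [norm_mul, norm_of_nonneg (inv_nonneg.2 (sqrt_nonneg v))]
    refine mul_le_mul_of_nonneg_left (hle x ?_ y) (inv_nonneg.2 (sqrt_nonneg v))
    rw [Metric.mem_ball, dist_eq] at hx
    linarith [abs_sub_abs_le_abs_sub x ε]
  · have := (hasDerivAt_greekKernel m hv i x y).const_mul (h y)
    exact this.congr_deriv (by ring)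

/-- The Cameron–Martin shift of a Gaussian integral. -/
lemma integral_shift_eq_integral_kernel (m : ℝ) {v : ℝ} (hv : 0 < v) (h : ℝ → ℝ) (i : ℕ)
    (ε : ℝ) :
    ∫ y, h (y + ε) * hermiteEval i ((y - m) / √v) ∂gaussianReal m v.toNNReal =
      ∫ y, h y * greekKernel m v i ε y ∂gaussianReal m v.toNNReal := by
  have hv' : v.toNNReal ≠ 0 := by simpa using hv
  rw [integral_gaussianReal_eq_integral_smul hv', integral_gaussianReal_eq_integral_smul hv',
    ← integral_add_right_eq_self
      (fun y => gaussianPDFReal m v.toNNReal y • (h y * greekKernel m v i ε y)) ε]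
  congr 1
  ext y
  have hexp : exp (-(y - m) ^ 2 / (2 * v)) =
      exp (-(y + ε - m) ^ 2 / (2 * v)) * exp ((ε * (y + ε - m) - ε ^ 2 / 2) / v) := by
    rw [← exp_add]
    congr 1
    field_simp
    ring
  have hyy : y + ε - m - ε = y - m := by ring
  simp only [gaussianPDFReal, greekKernel, smul_eq_mul, coe_toNNReal v hv.le, hyy, hexp]
  ring

/-- The Greeks `g_i^h` of Definition 3.4 of the paper are well defined for payoffs
of at most exponential growth: if `Y ~ N(m, v)`, `v > 0`, and `h` is continuous
with `|h(x)| ≤ c₁ e^{c₂|x|}`, then `g(ε) = E[h(Y + ε)]` is infinitely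
differentiable and `g^{(i)}(ε) = v^{-i/2} E[h(Y + ε) H_i((Y - m)/√v)]`. -/
theorem greeks_smooth_and_hermite_representation
    {Ω : Type*} [MeasurableSpace Ω] (P : Measure Ω) [IsProbabilityMeasure P]
    (m v : ℝ) (hv : 0 < v)
    (h : ℝ → ℝ) (hcont : Continuous h)
    (c₁ c₂ : ℝ) (hc₁ : 0 < c₁) (hc₂ : 0 < c₂)
    (hgrowth : ∀ x : ℝ, |h x| ≤ c₁ * Real.exp (c₂ * |x|))
    (Y : Ω → ℝ) (hY : P.map Y = gaussianReal m v.toNNReal)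
    (g : ℝ → ℝ) (hg : ∀ ε, g ε = ∫ ω, h (Y ω + ε) ∂P) :
    ContDiff ℝ (⊤ : ℕ∞) g ∧
    ∀ i : ℕ, 1 ≤ i → ∀ ε : ℝ,
      iteratedDeriv i g ε =
        (Real.sqrt v ^ i)⁻¹ *
          ∫ ω, h (Y ω + ε) * hermiteEval i ((Y ω - m) / Real.sqrt v) ∂P := by
  -- `P.map Y` would be the zero measure if `Y` were not a.e. measurable.
  have hY_meas : AEMeasurable Y P := by
    have : NeZero (P.map Y) := by rw [hY]; infer_instance
    exact aemeasurable_of_map_neZero this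
  set F : ℕ → ℝ → ℝ := fun i ε => ∫ y, h y * greekKernel m v i ε y ∂gaussianReal m v.toNNReal
    with hF
  have hrep : ∀ i ε, ∫ ω, h (Y ω + ε) * hermiteEval i ((Y ω - m) / √v) ∂P = F i ε := by
    intro i ε
    have hc := continuous_hermiteEval i
    rw [hF]
    simp only
    rw [← integral_shift_eq_integral_kernel m hv, ← hY, integral_map hY_meas]
    exact Continuous.aestronglyMeasurable (by fun_prop)
  have hderiv : ∀ i ε, HasDerivAt (F i) ((√v)⁻¹ * F (i + 1) ε) ε :=
    hasDerivAt_integral_greekKernel m hv hcont hgrowth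
  have hg0 : g = F 0 := by
    ext ε
    rw [hg, ← hrep]
    simp [hermiteEval]
  have hiter : ∀ i, iteratedDeriv i g = fun ε => (√v ^ i)⁻¹ * F i ε := by
    intro i
    induction i with
    | zero => simp [hg0]
    | succ i ih =>
      rw [iteratedDeriv_succ, ih]
      ext ε
      rw [((hderiv i ε).const_mul _).deriv, pow_succ, mul_inv, mul_assoc]
  refine ⟨contDiff_of_differentiable_iteratedDeriv fun i _ => ?_, fun i _ ε => ?_⟩
  · rw [hiter]
    exact fun ε => ((hderiv i ε).const_mul _).differentiableAt
  · rw [hiter, hrep]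
end
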